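/- Let M be a finitely generated right R-module. If Ext¹_R(M, −) commutes with direct sums, then M is a small-Ω¹-module, i.e., there is an exact sequence 0 → K → P → M → 0 with P projective and K small. -/

import Mathlib

open CategoryTheory CategoryTheory.Limits Opposite

noncomputable section

/-- The category of right `R`-modules. -/
abbrev RMod (R : Type) [Ring R] := ModuleCat.{0} Rᵐᵒᵖ

/-- `R` as a right module over itself. -/
abbrev regR (R : Type) [Ring R] : RMod R := ModuleCat.of Rᵐᵒᵖ R

/-- The covariant functor `Ext¹_R(M, -)` (more generally `Extⁿ_R(M, -)`). -/
abbrev extFun (R : Type) [Ring R] (n : ℕ) (M : RMod R) : RMod R ⥤ ModuleCat ℤ :=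
  (Ext ℤ (RMod R) n).obj (op M)

/-- `Ext¹_R(M,-)` commutes with direct limits (direct systems over directed sets). -/
def CommutesWithDirectLimits (R : Type) [Ring R] (M : RMod R) : Prop :=
  ∀ (J : Type) [Preorder J] [IsDirected J (· ≤ ·)] [Nonempty J],
    PreservesColimitsOfShape J (extFun R 1 M)

/-- `Ext¹_R(M,-)` commutes with direct sums. -/
def CommutesWithDirectSums (R : Type) [Ring R] (M : RMod R) : Prop :=
  ∀ (ι : Type), PreservesColimitsOfShape (Discrete ι) (extFun R 1 M)

/-- `Extⁿ_R(M,-)` commutes with direct sums of copies of `R`: the canonical map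
`Extⁿ_R(M,R)^{(ι)} → Extⁿ_R(M,R^{(ι)})` is an isomorphism for every index set `ι`. -/
def CommutesWithSumsOfR (R : Type) [Ring R] (n : ℕ) (M : RMod R) : Prop :=
  ∀ (ι : Type), IsIso (Sigma.desc
    (fun i : ι => (extFun R n M).map (Sigma.ι (fun _ : ι => regR R) i)))

/-- A module `K` is small iff `Hom_R(K,-)` commutes with direct sums. -/
def IsSmallModule (R : Type) [Ring R] (K : RMod R) : Prop :=
  ∀ (ι : Type), PreservesColimitsOfShape (Discrete ι) (preadditiveCoyoneda.obj (op K))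

/-- `M` has a short exact sequence `0 → K → P → M → 0` with `P` projective and `K`
satisfying the property `Q` (e.g. `M` is fp-Ω¹, fg-Ω¹ or small-Ω¹). -/
def IsOmega1 (R : Type) [Ring R] (Q : RMod R → Prop) (M : RMod R) : Prop :=
  ∃ (K P : RMod R) (i : K ⟶ P) (p : P ⟶ M) (w : i ≫ p = 0),
    Mono i ∧ Epi p ∧ (ShortComplex.mk i p w).Exact ∧ Projective P ∧ Q K

/-- `M` has projective dimension at most 1. -/
def HasProjDimLE1 (R : Type) [Ring R] (M : RMod R) : Prop :=
  ∃ (P₁ P₀ : RMod R) (f : P₁ ⟶ P₀) (p : P₀ ⟶ M) (w : f ≫ p = 0),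
    Projective P₁ ∧ Projective P₀ ∧ Mono f ∧ Epi p ∧ (ShortComplex.mk f p w).Exact

/-- `M` is `FP₂`: it admits a projective resolution which is finitely generated in
dimensions `0`, `1` and `2`. -/
def IsFP2 (R : Type) [Ring R] (M : RMod R) : Prop :=
  ∃ (P₂ P₁ P₀ : RMod R) (d₂ : P₂ ⟶ P₁) (d₁ : P₁ ⟶ P₀) (p : P₀ ⟶ M)
    (w₂ : d₂ ≫ d₁ = 0) (w₁ : d₁ ≫ p = 0),
    Projective P₂ ∧ Projective P₁ ∧ Projective P₀ ∧
    Module.Finite Rᵐᵒᵖ P₂ ∧ Module.Finite Rᵐᵒᵖ P₁ ∧ Module.Finite Rᵐᵒᵖ P₀ ∧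
    Epi p ∧ (ShortComplex.mk d₂ d₁ w₂).Exact ∧ (ShortComplex.mk d₁ p w₁).Exact

/-- `M` has injective dimension at most `n`, i.e. `Ext^k(-,M)` vanishes for `k > n`. -/
def HasInjDimLE (R : Type) [Ring R] (n : ℕ) (M : RMod R) : Prop :=
  ∀ (k : ℕ), n < k → ∀ (N : RMod R), IsZero (((Ext ℤ (RMod R) k).obj (op N)).obj M)

/-!
Let `0 → K → P → M → 0` be exact with `P` finitely generated projective. Splicing a projective
resolution of `K` onto `P` gives a projective resolution of `M`, from which one reads off an exact
sequence `Hom(P, -) → Hom(K, -) → Ext¹(M, -) → 0` of natural transformations. For an additive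
functor the canonical map from a direct sum is always injective, because the projections of the
direct sum provide a retraction onto each summand. Hence only surjectivity is at stake, and the
surjectivity half of the four lemma carries it from `Hom(P, -)`, where it holds because `P` is
finitely generated, and from `Ext¹(M, -)` to `Hom(K, -)`.
-/

universe v u w

section Coproducts

variable {A : Type*} [Ring A] {ι : Type*}

section Projections

variable {C : Type*} [Category* C] [HasZeroMorphisms C] [DecidableEq ι] {Z : ι → C} {c : Cofan Z}

/-- The projection of a coproduct onto its `j`-th summand. -/
def cofanProj (hc : IsColimit c) (j : ι) : c.pt ⟶ Z j :=
  Cofan.IsColimit.desc hc (Pi.single j (𝟙 (Z j)))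

lemma inj_comp_cofanProj_self (hc : IsColimit c) (j : ι) :
    c.inj j ≫ cofanProj hc j = 𝟙 (Z j) :=
  (Cofan.IsColimit.fac hc _ j).trans (Pi.single_eq_same _ _)

lemma inj_comp_cofanProj_of_ne (hc : IsColimit c) {i j : ι} (hij : i ≠ j) :
    c.inj i ≫ cofanProj hc j = 0 :=
  (Cofan.IsColimit.fac hc _ i).trans (Pi.single_eq_of_ne hij _)

end Projections

lemma range_directSum_toModule [DecidableEq ι] {N : ι → Type*} {N' : Type*}
    [∀ i, AddCommGroup (N i)] [∀ i, Module A (N i)] [AddCommGroup N'] [Module A N']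
    (φ : ∀ i, N i →ₗ[A] N') :
    LinearMap.range (DirectSum.toModule A ι N' φ) = ⨆ i, LinearMap.range (φ i) := by
  refine le_antisymm ?_ (iSup_le fun i => ?_)
  · rintro _ ⟨x, rfl⟩
    induction x using DirectSum.induction_on with
    | zero => simp
    | of i x =>
      rw [← DirectSum.lof_eq_of A, DirectSum.toModule_lof]
      exact Submodule.mem_iSup_of_mem i ⟨x, rfl⟩
    | add x y hx hy => simpa using add_mem hx hy
  · rintro _ ⟨x, rfl⟩
    exact ⟨_, DirectSum.toModule_lof A i x⟩

lemma iSup_range_inj_eq_top {N : ι → ModuleCat.{w} A} {c : Cofan N} (hc : IsColimit c) :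
    ⨆ i, LinearMap.range (c.inj i).hom = ⊤ := by
  rw [← Submodule.ker_mkQ (⨆ i, LinearMap.range (c.inj i).hom), LinearMap.ker_eq_top]
  refine congrArg ModuleCat.Hom.hom
    (Cofan.IsColimit.hom_ext hc (ModuleCat.ofHom (Submodule.mkQ _)) 0 fun i => ?_)
  ext y
  exact (Submodule.Quotient.mk_eq_zero _).2 (Submodule.mem_iSup_of_mem i ⟨y, rfl⟩)

lemma nonempty_isColimit_of_bijective_toModule [DecidableEq ι] {N : ι → ModuleCat.{w} A}
    {c : Cofan N}
    (h : Function.Bijective (DirectSum.toModule A ι c.pt fun i => (c.inj i).hom)) :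
    Nonempty (IsColimit c) := by
  let e := LinearEquiv.ofBijective _ h
  have he (i : ι) : e.symm ∘ₗ (c.inj i).hom = DirectSum.lof A ι (fun i => N i) i :=
    LinearMap.ext fun x => e.symm_apply_eq.2 (by simp [e])
  refine ⟨Cofan.IsColimit.mk c
    (fun s => ModuleCat.ofHom (DirectSum.toModule A ι s.pt (fun i => (s.inj i).hom) ∘ₗ e.symm))
    (fun s i => ?_) fun s m hm => ?_⟩
  · refine ModuleCat.hom_ext ?_
    rw [ModuleCat.hom_comp, ModuleCat.hom_ofHom, LinearMap.comp_assoc, he]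
    exact LinearMap.ext fun x => DirectSum.toModule_lof A (φ := fun i => (s.inj i).hom) i x
  · have hme : m.hom ∘ₗ e = DirectSum.toModule A ι s.pt fun i => (s.inj i).hom :=
      DirectSum.linearMap_ext A fun i => LinearMap.ext fun x => by simp [e, ← hm]
    rw [← hme, LinearMap.comp_assoc, LinearEquiv.comp_symm, LinearMap.comp_id,
      ModuleCat.ofHom_hom]

variable {C : Type u} [Category.{v} C]

lemma toModule_map_inj_injective [HasZeroMorphisms C] [DecidableEq ι] (G : C ⥤ ModuleCat.{w} A)
    [G.PreservesZeroMorphisms] {Z : ι → C} {c : Cofan Z} (hc : IsColimit c) :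
    Function.Injective
      (DirectSum.toModule A ι (G.obj c.pt) fun i => (G.map (c.inj i)).hom) := by
  have hproj (j : ι) : (G.map (cofanProj hc j)).hom ∘ₗ
      (DirectSum.toModule A ι (G.obj c.pt) fun i => (G.map (c.inj i)).hom) =
      DirectSum.component A ι (fun i => G.obj (Z i)) j := by
    refine DirectSum.linearMap_ext A fun i => LinearMap.ext fun x => ?_
    rcases eq_or_ne i j with rfl | hij
    · have hx := congr((G.map $(inj_comp_cofanProj_self hc i)).hom x)
      simpa using hx
    · have hx := congr((G.map $(inj_comp_cofanProj_of_ne hc hij)).hom x)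
      simpa [hij, DirectSum.component.of] using hx
  intro x y hxy
  refine DFinsupp.ext fun j => ?_
  exact congr($(hproj j) x).symm.trans
    ((congrArg (G.map (cofanProj hc j)) hxy).trans congr($(hproj j) y))

lemma preservesColimitsOfShape_discrete_of_iSup_range_map_inj_eq_top [HasZeroMorphisms C]
    (G : C ⥤ ModuleCat.{w} A) [G.PreservesZeroMorphisms]
    (h : ∀ (Z : ι → C) (c : Cofan Z), IsColimit c →
      ⨆ i, LinearMap.range (G.map (c.inj i)).hom = ⊤) :
    PreservesColimitsOfShape (Discrete ι) G := by
  classical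
  have (Z : ι → C) : PreservesColimit (Discrete.functor Z) G := by
    refine ⟨fun {c : Cofan Z} hc => ?_⟩
    have hsurj := LinearMap.range_eq_top.1 ((range_directSum_toModule _).trans (h Z c hc))
    exact (nonempty_isColimit_of_bijective_toModule
      (c := Cofan.mk (G.obj c.pt) fun i => G.map (Cofan.inj c i))
      ⟨toModule_map_inj_injective G hc, hsurj⟩).map (Cofan.isColimitMapCoconeEquiv G Z c).symm
  exact preservesColimitsOfShape_of_discrete G

lemma iSup_range_map_inj_eq_top (G : C ⥤ ModuleCat.{w} A)
    [PreservesColimitsOfShape (Discrete ι) G] {Z : ι → C} {c : Cofan Z} (hc : IsColimit c) :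
    ⨆ i, LinearMap.range (G.map (c.inj i)).hom = ⊤ :=
  iSup_range_inj_eq_top (c.isColimitMapCoconeEquiv G Z (isColimitOfPreserves G hc))

theorem preservesColimitsOfShape_discrete_of_exact [HasZeroMorphisms C]
    {F G H : C ⥤ ModuleCat.{w} A} [G.PreservesZeroMorphisms]
    [PreservesColimitsOfShape (Discrete ι) F] [PreservesColimitsOfShape (Discrete ι) H]
    (α : F ⟶ G) (β : G ⟶ H) (hαβ : ∀ X, Function.Exact (α.app X) (β.app X))
    (hβ : ∀ X, Function.Surjective (β.app X)) :
    PreservesColimitsOfShape (Discrete ι) G := by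
  refine preservesColimitsOfShape_discrete_of_iSup_range_map_inj_eq_top G fun Z c hc => ?_
  set N := ⨆ i, LinearMap.range (G.map (c.inj i)).hom with hN
  have hker : LinearMap.ker (β.app c.pt).hom ≤ N := by
    rw [(hαβ c.pt).linearMap_ker_eq, LinearMap.range_eq_map, ← iSup_range_map_inj_eq_top F hc,
      Submodule.map_iSup]
    refine iSup_mono fun i => ?_
    rintro _ ⟨_, ⟨x, rfl⟩, rfl⟩
    exact ⟨α.app _ x, (ConcreteCategory.congr_hom (α.naturality (c.inj i)) x).symm⟩
  have hmap : N.map (β.app c.pt).hom = ⊤ := by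
    rw [eq_top_iff, ← iSup_range_map_inj_eq_top H hc, hN, Submodule.map_iSup]
    refine iSup_mono fun i => ?_
    rintro _ ⟨y, rfl⟩
    obtain ⟨x, rfl⟩ := hβ (Z i) y
    exact ⟨_, ⟨x, rfl⟩, ConcreteCategory.congr_hom (β.naturality (c.inj i)) x⟩
  rw [← Submodule.comap_map_eq_self hker, hmap, Submodule.comap_top]

section Finite

variable {N : ι → ModuleCat.{w} A} {c : Cofan N} (hc : IsColimit c) {F : ModuleCat.{w} A}
  [Module.Finite A F] (f : F ⟶ c.pt)

include hc in
lemma exists_range_le_iSup_range_inj :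
    ∃ s : Finset ι, LinearMap.range f.hom ≤ ⨆ i ∈ s, LinearMap.range (c.inj i).hom :=
  CompleteLattice.IsCompactElement.exists_finset_of_le_iSup _
    ((Submodule.fg_iff_compact _).1 (Submodule.fg_range f.hom)) _
    (le_top.trans (iSup_range_inj_eq_top hc).ge)

lemma exists_eq_sum_comp_cofanProj_comp_inj [DecidableEq ι] :
    ∃ s : Finset ι, f = ∑ i ∈ s, (f ≫ cofanProj hc i) ≫ c.inj i := by
  obtain ⟨s, hs⟩ := exists_range_le_iSup_range_inj hc f
  refine ⟨s, ?_⟩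
  let e : c.pt ⟶ c.pt := ∑ i ∈ s, cofanProj hc i ≫ c.inj i
  have he {i} (hi : i ∈ s) : c.inj i ≫ e = c.inj i := by
    rw [Preadditive.comp_sum, Finset.sum_eq_single_of_mem i hi, ← Category.assoc,
      inj_comp_cofanProj_self, Category.id_comp]
    intro j _ hji
    rw [← Category.assoc, inj_comp_cofanProj_of_ne hc hji.symm, zero_comp]
  have hle : LinearMap.range f.hom ≤ LinearMap.eqLocus e.hom LinearMap.id := by
    refine hs.trans (iSup₂_le fun i hi => ?_)
    rintro _ ⟨y, rfl⟩
    exact ConcreteCategory.congr_hom (he hi) y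
  have hfe : f ≫ e = f := by
    ext x
    exact hle ⟨x, rfl⟩
  simpa only [e, Preadditive.comp_sum, Category.assoc] using hfe.symm

end Finite

lemma preservesColimitsOfShape_linearCoyoneda_of_finite {S : Type*} [Ring S]
    [Linear A (ModuleCat.{w} S)] (F : ModuleCat.{w} S) [Module.Finite S F] :
    PreservesColimitsOfShape (Discrete ι) ((linearCoyoneda A (ModuleCat.{w} S)).obj (op F)) := by
  classical
  refine preservesColimitsOfShape_discrete_of_iSup_range_map_inj_eq_top _ fun N c hc =>
    eq_top_iff.2 fun f _ => ?_
  obtain ⟨s, hs⟩ := exists_eq_sum_comp_cofanProj_comp_inj hc (f : F ⟶ c.pt)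
  rw [hs]
  exact Submodule.sum_mem _ fun i _ => Submodule.mem_iSup_of_mem i ⟨f ≫ cofanProj hc i, rfl⟩

end Coproducts

section Resolutions

variable {C : Type*} [Category* C]

section Exact

variable [HasZeroMorphisms C] {W X Y Z : C} {f : X ⟶ Y} {g : Y ⟶ Z} {w : f ≫ g = 0}

lemma exact_epi_comp (h : (ShortComplex.mk f g w).Exact) {e : W ⟶ X} (he : Epi e) :
    (ShortComplex.mk (e ≫ f) g (by rw [Category.assoc, w, comp_zero])).Exact :=
  let φ : ShortComplex.mk (e ≫ f) g (by rw [Category.assoc, w, comp_zero]) ⟶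
      ShortComplex.mk f g w := { τ₁ := e, τ₂ := 𝟙 Y, τ₃ := 𝟙 Z }
  (ShortComplex.exact_iff_of_epi_of_isIso_of_mono φ).2 h

lemma exact_comp_mono (h : (ShortComplex.mk f g w).Exact) (m : Z ⟶ W) [Mono m] :
    (ShortComplex.mk f (g ≫ m) (by rw [← Category.assoc, w, zero_comp])).Exact :=
  let φ : ShortComplex.mk f g w ⟶
      ShortComplex.mk f (g ≫ m) (by rw [← Category.assoc, w, zero_comp]) :=
    { τ₁ := 𝟙 X, τ₂ := 𝟙 Y, τ₃ := m }
  (ShortComplex.exact_iff_of_epi_of_isIso_of_mono φ).1 h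

end Exact

variable [Abelian C]

/-- A chain complex of projectives which is exact in positive degrees and augmented by a cokernel
`ε` of its last differential, as a projective resolution of the target of `ε`. -/
def resolutionOfExact {X : C} (K : ChainComplex C ℕ) (hK : ∀ n, Projective (K.X n))
    (ε : K.X 0 ⟶ X) (hε : Epi ε) (w : K.d 1 0 ≫ ε = 0) (h₀ : (ShortComplex.mk _ _ w).Exact)
    (h : ∀ n, (ShortComplex.mk _ _ (K.d_comp_d (n + 2) (n + 1) n)).Exact) :
    ProjectiveResolution X where
  complex := K
  projective := hK
  π := (ChainComplex.toSingle₀Equiv _ _).symm ⟨ε, w⟩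
  quasiIso := ⟨fun
    | 0 => by
      have hπ := ChainComplex.toSingle₀Equiv_symm_apply_f_zero ε w
      rw [ChainComplex.quasiIsoAt₀_iff, ShortComplex.quasiIso_iff_of_zeros']
      · refine (ShortComplex.exact_and_epi_g_iff_of_iso ?_).2 ⟨h₀, hε⟩
        exact ShortComplex.isoMk (Iso.refl _) (Iso.refl _) (Iso.refl _)
          ((Category.id_comp _).trans (Category.comp_id _).symm)
          ((Category.id_comp _).trans (hπ.symm.trans (Category.comp_id _).symm))
      · exact K.shape 0 0 (by simp)
      all_goals rfl
    | n + 1 => by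
      rw [quasiIsoAt_iff_exactAt' _ _ (ChainComplex.exactAt_succ_single_obj _ _),
        HomologicalComplex.exactAt_iff' _ (n + 2) (n + 1) n (by simp) (by simp)]
      exact h n⟩

/-- Given a short exact sequence `0 ⟶ X₁ ⟶ X₂ ⟶ X₃ ⟶ 0` with `X₂` projective, the projective
resolution of `X₃` obtained by splicing a projective resolution of `X₁` with `X₂` in degree `0`. -/
def spliceResolution {S : ShortComplex C} (hS : S.ShortExact) (hP : Projective S.X₂)
    (Q : ProjectiveResolution S.X₁) : ProjectiveResolution S.X₃ :=
  have := hS.mono_f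
  let ε : Q.complex.X 0 ⟶ S.X₁ := Q.π.f 0
  have hε : Q.complex.d 1 0 ≫ ε = 0 := Q.complex_d_comp_π_f_zero
  have hεepi : Epi ε := inferInstanceAs (Epi (Q.π.f 0))
  have w : (ε ≫ S.f) ≫ S.g = 0 := by rw [Category.assoc, S.zero, comp_zero]
  resolutionOfExact
    (Q.complex.augment (ε ≫ S.f) (by rw [← Category.assoc, hε, zero_comp]))
    (fun
      | 0 => hP
      | n + 1 => Q.projective n)
    S.g hS.epi_g w (exact_epi_comp hS.exact hεepi) fun
      | 0 => exact_comp_mono (w := hε) Q.exact₀ S.f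
      | n + 1 => Q.exact_succ n

end Resolutions

section Homology

variable {C : Type*} [Category* C] [Abelian C] {κ : Type*} {c : ComplexShape κ}
  {K L : HomologicalComplex C c} {i j k : κ} {Y Y' : C}

/-- The map out of the homology in degree `j` induced by a morphism `p : K.X j ⟶ Y` that vanishes
on boundaries. -/
def homologyDesc (hij : c.prev j = i) (p : K.X j ⟶ Y) (hp : K.d i j ≫ p = 0) :
    K.homology j ⟶ Y :=
  K.homologyι j ≫ K.descOpcycles p i hij hp

lemma homologyMap_comp_homologyDesc (hij : c.prev j = i) {p : K.X j ⟶ Y} (hp : K.d i j ≫ p = 0)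
    {p' : L.X j ⟶ Y'} (hp' : L.d i j ≫ p' = 0) (φ : K ⟶ L) {f : Y ⟶ Y'}
    (h : φ.f j ≫ p' = p ≫ f) :
    HomologicalComplex.homologyMap φ j ≫ homologyDesc hij p' hp' = homologyDesc hij p hp ≫ f := by
  have hdesc : HomologicalComplex.opcyclesMap φ j ≫ L.descOpcycles p' i hij hp' =
      K.descOpcycles p i hij hp ≫ f := by
    simp only [← cancel_epi (K.pOpcycles j), HomologicalComplex.opcyclesMap_comp_descOpcycles,
      HomologicalComplex.p_descOpcycles, HomologicalComplex.p_descOpcycles_assoc, h]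
  simp only [homologyDesc, Category.assoc, ← hdesc,
    HomologicalComplex.homologyι_naturality_assoc]

lemma exact_homologyDesc (hij : c.prev j = i) (hjk : c.next j = k) {p : K.X j ⟶ Y}
    {hp : K.d i j ≫ p = 0} (hepi : Epi p) (hex : (ShortComplex.mk _ _ hp).Exact) {f : Y ⟶ K.X k}
    (hf : p ≫ f = K.d j k) :
    ∃ w : homologyDesc hij p hp ≫ f = 0, Mono (homologyDesc hij p hp) ∧
      (ShortComplex.mk _ _ w).Exact := by
  let e : K.opcycles j ≅ Y :=
    (K.opcyclesIsCokernel i j hij).coconePointUniqueUpToIso hex.gIsCokernel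
  have he : e.hom = K.descOpcycles p i hij hp := by
    simp only [← cancel_epi (K.pOpcycles j), HomologicalComplex.p_descOpcycles]
    exact (K.opcyclesIsCokernel i j hij).comp_coconePointUniqueUpToIso_hom hex.gIsCokernel .one
  have hef : e.hom ≫ f = K.fromOpcycles j k := by
    simp only [← cancel_epi (K.pOpcycles j), he, HomologicalComplex.p_descOpcycles_assoc, hf,
      HomologicalComplex.p_fromOpcycles]
  have hι : homologyDesc hij p hp = K.homologyι j ≫ e.hom := by rw [homologyDesc, he]
  have w : homologyDesc hij p hp ≫ f = 0 := by
    rw [hι, Category.assoc, hef, K.homologyι_comp_fromOpcycles]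
  have hexι := ShortComplex.exact_of_f_is_kernel (.mk _ _ (K.homologyι_comp_fromOpcycles j k))
    (K.homologyIsKernel j k hjk)
  refine ⟨w, hι ▸ inferInstance, (ShortComplex.exact_iff_of_iso ?_).1 hexι⟩
  exact ShortComplex.isoMk (Iso.refl _) e (Iso.refl _) (by simp [hι]) (by simp [hef])

end Homology

section LeftDerived

variable {C : Type*} [Category* C] [Abelian C] {D : Type*} [Category* D] [Abelian D]

lemma mapHomologicalComplex_d_comp_map {κ : Type*} {c : ComplexShape κ}
    {K : HomologicalComplex C c} {i j : κ} {Y : C} {p : K.X j ⟶ Y} (hp : K.d i j ≫ p = 0)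
    (F : C ⥤ D) [F.PreservesZeroMorphisms] :
    ((F.mapHomologicalComplex c).obj K).d i j ≫ F.map p = 0 :=
  (F.map_comp _ _).symm.trans ((congrArg F.map hp).trans (F.map_zero _ _))

variable [HasProjectiveResolutions C] {X Y : C} (P : ProjectiveResolution X) {n : ℕ}
  (F : C ⥤ D) [F.Additive]

/-- The map from the `n`-th left derived functor of `F` at `X` to `F Y` induced by a morphism
`p : Pₙ ⟶ Y` from a projective resolution of `X` that vanishes on boundaries. -/
def leftDerivedDesc {p : P.complex.X n ⟶ Y} (hp : P.complex.d (n + 1) n ≫ p = 0) :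
    (F.leftDerived n).obj X ⟶ F.obj Y :=
  (P.isoLeftDerivedObj F n).hom ≫
    homologyDesc (i := n + 1) (by simp) (F.map p) (mapHomologicalComplex_d_comp_map hp F)

lemma leftDerivedDesc_naturality {p : P.complex.X n ⟶ Y} (hp : P.complex.d (n + 1) n ≫ p = 0)
    {F G : C ⥤ D} [F.Additive] [G.Additive] (α : F ⟶ G) :
    (NatTrans.leftDerived α n).app X ≫ leftDerivedDesc P G hp =
      leftDerivedDesc P F hp ≫ α.app Y := by
  let φ := (NatTrans.mapHomologicalComplex α (ComplexShape.down ℕ)).app P.complex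
  have hφ : (NatTrans.leftDerived α n).app X ≫ (P.isoLeftDerivedObj G n).hom =
      (P.isoLeftDerivedObj F n).hom ≫ HomologicalComplex.homologyMap φ n := by
    rw [P.leftDerived_app_eq α, Category.assoc, Category.assoc, Iso.inv_hom_id, Category.comp_id]
    rfl
  have hdesc := homologyMap_comp_homologyDesc (by simp) (mapHomologicalComplex_d_comp_map hp F)
    (mapHomologicalComplex_d_comp_map hp G) φ (α.naturality p).symm
  exact (Category.assoc _ _ _).symm.trans <| (congrArg (· ≫ _) hφ).trans <|
    (Category.assoc _ _ _).trans <| (congrArg (_ ≫ ·) hdesc).trans (Category.assoc _ _ _).symm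

lemma exact_leftDerivedDesc [PreservesFiniteColimits F] {p : P.complex.X (n + 1) ⟶ Y}
    {hp : P.complex.d (n + 2) (n + 1) ≫ p = 0} (hepi : Epi p)
    (hex : (ShortComplex.mk _ _ hp).Exact) {f : Y ⟶ P.complex.X n}
    (hf : p ≫ f = P.complex.d (n + 1) n) :
    ∃ w : leftDerivedDesc P F hp ≫ F.map f = 0, Mono (leftDerivedDesc P F hp) ∧
      (ShortComplex.mk _ _ w).Exact := by
  have hFex := hex.map_of_epi_of_preservesCokernel F hepi inferInstance
  obtain ⟨w, hmono, hexι⟩ := exact_homologyDesc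
    (K := (F.mapHomologicalComplex _).obj P.complex) (p := F.map p) (by simp) (by simp)
    (inferInstanceAs (Epi (F.map p))) hFex
    ((F.map_comp p f).symm.trans (congrArg F.map hf))
  have hiso : Epi (P.isoLeftDerivedObj F (n + 1)).hom := inferInstance
  exact ⟨_, mono_comp' inferInstance hmono, exact_epi_comp hexι hiso⟩

end LeftDerived

section Ext

variable {A : Type*} [Ring A] {C : Type*} [Category* C] [Abelian C] [Linear A C]

instance linearYoneda_obj_preservesLimits (Y : C) :
    PreservesLimits ((linearYoneda A C).obj Y) :=
  have : PreservesLimits ((linearYoneda A C).obj Y ⋙ forget _) :=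
    inferInstanceAs (PreservesLimits (yoneda.obj Y))
  preservesLimits_of_reflects_of_preserves _ (forget _)

instance linearYoneda_obj_rightOp_preservesFiniteColimits (Y : C) :
    PreservesFiniteColimits ((linearYoneda A C).obj Y).rightOp :=
  preservesFiniteColimits_rightOp _

variable [EnoughProjectives C] {X Y : C} (P : ProjectiveResolution X) {n : ℕ}

variable (A) in
/-- The connecting transformation `Hom(Y, -) ⟶ Extⁿ(X, -)` sending `f` to the class of the cocycle
`p ≫ f`, for a morphism `p : Pₙ ⟶ Y` from a projective resolution of `X` that vanishes on
boundaries. -/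
def homToExt {p : P.complex.X n ⟶ Y} (hp : P.complex.d (n + 1) n ≫ p = 0) :
    (linearCoyoneda A C).obj (op Y) ⟶ (Ext A C n).obj (op X) where
  app Z := (leftDerivedDesc P ((linearYoneda A C).obj Z).rightOp hp).unop
  naturality _ _ g := congrArg Quiver.Hom.unop
    (leftDerivedDesc_naturality P hp (NatTrans.rightOp ((linearYoneda A C).map g))).symm

section Syzygy

variable {p : P.complex.X (n + 1) ⟶ Y} {hp : P.complex.d (n + 2) (n + 1) ≫ p = 0} (hepi : Epi p)
  (hex : (ShortComplex.mk _ _ hp).Exact) {f : Y ⟶ P.complex.X n}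
  (hf : p ≫ f = P.complex.d (n + 1) n)

include hepi hex hf

lemma homToExt_app_surjective_and_exact (Z : C) :
    Function.Surjective ((homToExt A P hp).app Z) ∧
      Function.Exact (((linearCoyoneda A C).map f.op).app Z) ((homToExt A P hp).app Z) := by
  obtain ⟨w, hmono, hexact⟩ :=
    exact_leftDerivedDesc P ((linearYoneda A C).obj Z).rightOp hepi hex hf
  have happ : Epi ((homToExt A P hp).app Z) :=
    unop_epi_of_mono (leftDerivedDesc P ((linearYoneda A C).obj Z).rightOp hp)
  exact ⟨(ModuleCat.epi_iff_surjective _).1 happ,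
    (ShortComplex.ShortExact.moduleCat_exact_iff_function_exact _).1 hexact.unop⟩

theorem preservesColimitsOfShape_linearCoyoneda_of_resolution {ι : Type*}
    [PreservesColimitsOfShape (Discrete ι) ((linearCoyoneda A C).obj (op (P.complex.X n)))]
    [PreservesColimitsOfShape (Discrete ι) ((Ext A C (n + 1)).obj (op X))] :
    PreservesColimitsOfShape (Discrete ι) ((linearCoyoneda A C).obj (op Y)) :=
  preservesColimitsOfShape_discrete_of_exact ((linearCoyoneda A C).map f.op) (homToExt A P hp)
    (fun Z => (homToExt_app_surjective_and_exact P hepi hex hf Z).2)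
    fun Z => (homToExt_app_surjective_and_exact P hepi hex hf Z).1

end Syzygy

theorem preservesColimitsOfShape_linearCoyoneda_of_shortExact {ι : Type*} {S : ShortComplex C}
    (hS : S.ShortExact) (hP : Projective S.X₂)
    [h₂ : PreservesColimitsOfShape (Discrete ι) ((linearCoyoneda A C).obj (op S.X₂))]
    [PreservesColimitsOfShape (Discrete ι) ((Ext A C 1).obj (op S.X₃))] :
    PreservesColimitsOfShape (Discrete ι) ((linearCoyoneda A C).obj (op S.X₁)) :=
  let Q := projectiveResolution S.X₁
  have : PreservesColimitsOfShape (Discrete ι)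
      ((linearCoyoneda A C).obj (op ((spliceResolution hS hP Q).complex.X 0))) := h₂
  preservesColimitsOfShape_linearCoyoneda_of_resolution (spliceResolution hS hP Q) (n := 0)
    (p := Q.π.f 0) (hp := Q.complex_d_comp_π_f_zero) (inferInstanceAs (Epi (Q.π.f 0))) Q.exact₀
    (f := S.f) rfl

end Ext

lemma preservesColimitsOfShape_preadditiveCoyoneda {C : Type*} [Category* C] [Preadditive C]
    (X : C) {J : Type*} [Category* J]
    [PreservesColimitsOfShape J ((linearCoyoneda ℤ C).obj (op X))] :
    PreservesColimitsOfShape J (preadditiveCoyoneda.obj (op X)) :=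
  inferInstanceAs (PreservesColimitsOfShape J
    ((linearCoyoneda ℤ C).obj (op X) ⋙ forget₂ (ModuleCat ℤ) AddCommGrpCat))

lemma exists_epi_finite_projective {S : Type u} [Ring S] [Small.{v} S] (M : ModuleCat.{v} S)
    [Module.Finite S M] :
    ∃ (P : ModuleCat.{v} S) (p : P ⟶ M), Module.Finite S P ∧ Projective P ∧ Epi p := by
  obtain ⟨n, q, hq⟩ := Module.Finite.exists_fin' S M
  let e : (Fin n → Shrink.{v} S) ≃ₗ[S] (Fin n → S) :=
    LinearEquiv.piCongrRight fun _ => Shrink.linearEquiv S S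
  refine ⟨ModuleCat.of S (Fin n → Shrink.{v} S), ModuleCat.ofHom (q ∘ₗ e), .equiv e.symm, ?_, ?_⟩
  · have : Module.Projective S (Fin n → Shrink.{v} S) := .of_equiv e.symm
    exact (IsProjective.iff_projective _).1 this
  · exact (ModuleCat.epi_iff_surjective _).2 (hq.comp e.surjective)

theorem fg_ext1_commutes_with_direct_sums_implies_smallOmega1_general {S : Type u} [Ring S]
    [Small.{v} S] (M : ModuleCat.{v} S) [Module.Finite S M] :
    ∃ (K P : ModuleCat.{v} S) (i : K ⟶ P) (p : P ⟶ M) (w : i ≫ p = 0),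
      Mono i ∧ Epi p ∧ (ShortComplex.mk i p w).Exact ∧ Projective P ∧
      ∀ ι : Type w, PreservesColimitsOfShape (Discrete ι) ((Ext ℤ (ModuleCat.{v} S) 1).obj (op M)) →
        PreservesColimitsOfShape (Discrete ι) (preadditiveCoyoneda.obj (op K)) := by
  obtain ⟨P, p, hfin, hP, hp⟩ := exists_epi_finite_projective M
  have hS : (ShortComplex.mk (kernel.ι p) p (kernel.condition p)).ShortExact :=
    { exact := ShortComplex.exact_kernel p }
  refine ⟨kernel p, P, kernel.ι p, p, kernel.condition p, inferInstance, hp, hS.exact, hP,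
    fun ι hExt => ?_⟩
  have := preservesColimitsOfShape_linearCoyoneda_of_finite (A := ℤ) (ι := ι) P
  have := preservesColimitsOfShape_linearCoyoneda_of_shortExact (A := ℤ) (ι := ι) hS hP
  exact preservesColimitsOfShape_preadditiveCoyoneda _

theorem fg_ext1_commutes_with_direct_sums_implies_smallOmega1
    (R : Type) [Ring R] (M : RMod R) (hfg : Module.Finite Rᵐᵒᵖ M)
    (h : CommutesWithDirectSums R M) :
    IsOmega1 R (fun K => IsSmallModule R K) M := by
  obtain ⟨K, P, i, p, w, hi, hp, hex, hP, hK⟩ :=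
    fg_ext1_commutes_with_direct_sums_implies_smallOmega1_general M
  exact ⟨K, P, i, p, w, hi, hp, hex, hP, fun ι => hK ι (h ι)⟩
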